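/- arXiv:1807.01580 — 5 statements merged into one kernel-verified Lean document; each statement's English description precedes it below -/
import Mathlib

section
/- Let X be a finite type, n : ℕ, and A : Fin n → Set X an injective family of edges. For each i let G_i = {g : Equiv.Perm X | g '' A i = A i}, and suppose σ : Fin n → Fin n → Equiv.Perm X satisfies (σ i j) '' A i = A j for all i, j. Then the intersection of unions of cosets equals the union, over permutations of the index set, of intersections of cosets: ⋂ i, ⋃ j, {σ i j * h | h ∈ G_i} = ⋃ (π : Equiv.Perm (Fin n)), ⋂ i, {σ i (π i) * h | h ∈ G_i}. -/
/-!
The left coset of the stabilizer of `x` by an element carrying `x` to `y` is the set of all group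
elements carrying `x` to `y`. So the left-hand side consists of the `g` that map the family of edges
into itself, and the right-hand side of those that permute its indices. These agree because `g`
acts injectively, and an injective self-map of a finite index set is a permutation.
-/

open scoped Pointwise

theorem range_subset_range_iff_exists_comp_perm {ι α : Type*} [Finite ι] {f a : ι → α}
    (hf : Function.Injective f) :
    Set.range f ⊆ Set.range a ↔ ∃ π : Equiv.Perm ι, f = a ∘ π := by
  rw [Set.range_subset_range_iff_exists_comp]
  constructor
  · rintro ⟨p, rfl⟩
    exact ⟨.ofBijective p hf.of_comp.bijective_of_finite, rfl⟩
  · rintro ⟨π, rfl⟩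
    exact ⟨π, rfl⟩

section GroupAction

open MulAction

variable {G α : Type*} [Group G] [MulAction G α]

theorem mem_smul_stabilizer_iff {x y : α} {s g : G} (hs : s • x = y) :
    g ∈ s • (stabilizer G x : Set G) ↔ g • x = y := by
  rw [mem_leftCoset_iff, SetLike.mem_coe, mem_stabilizer_iff, mul_smul, inv_smul_eq_iff, hs]

theorem stmt_3_general {ι : Type*} [Finite ι] {a : ι → α} (ha : Function.Injective a)
    {σ : ι → ι → G} (hσ : ∀ i j, σ i j • a i = a j) :
    ⋂ i, ⋃ j, σ i j • (stabilizer G (a i) : Set G)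
      = ⋃ π : Equiv.Perm ι, ⋂ i, σ i (π i) • (stabilizer G (a i) : Set G) := by
  ext g
  have smul_injective : Function.Injective (fun i => g • a i) := (MulAction.injective g).comp ha
  calc g ∈ ⋂ i, ⋃ j, σ i j • (stabilizer G (a i) : Set G)
    _ ↔ ∀ i, ∃ j, g • a i = a j := by
      simp only [Set.mem_iInter, Set.mem_iUnion, mem_smul_stabilizer_iff (hσ _ _)]
    _ ↔ Set.range (fun i => g • a i) ⊆ Set.range a := by
      simp only [Set.range_subset_iff, Set.mem_range, eq_comm]
    _ ↔ ∃ π : Equiv.Perm ι, (fun i => g • a i) = a ∘ π :=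
      range_subset_range_iff_exists_comp_perm smul_injective
    _ ↔ g ∈ ⋃ π : Equiv.Perm ι, ⋂ i, σ i (π i) • (stabilizer G (a i) : Set G) := by
      simp only [Set.mem_iInter, Set.mem_iUnion, mem_smul_stabilizer_iff (hσ _ _), funext_iff,
        Function.comp_apply]

end GroupAction

theorem stmt_3 {X : Type*} [Fintype X] (n : ℕ) (A : Fin n → Set X)
    (hA : Function.Injective A)
    (σ : Fin n → Fin n → Equiv.Perm X)
    (hσ : ∀ i j, ⇑(σ i j) '' A i = A j) :
    (⋂ i, ⋃ j, {σ i j * h | h ∈ {g : Equiv.Perm X | ⇑g '' A i = A i}})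
      = ⋃ (π : Equiv.Perm (Fin n)),
          ⋂ i, {σ i (π i) * h | h ∈ {g : Equiv.Perm X | ⇑g '' A i = A i}} :=
  -- The pointwise actions on `Set X` and `Set (Equiv.Perm X)` unfold to the images written above.
  stmt_3_general hA hσ
end

section
/- Let X be a finite type with decidable equality and let Γ : Finset (Finset X) be a spanning graph on X: every edge A ∈ Γ has A.card = 2, and every point of X lies in some edge. Call an edge e ∈ Γ a radical if every vertex of e lies in no other edge of Γ (∀ x ∈ e, ∀ e' ∈ Γ, x ∈ e' → e' = e). Then the group K_Γ = {g : Equiv.Perm X | ∀ e ∈ Γ, e.image g = e} is trivial (equal to {1}) if and only if Γ has no radicals. -/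
/-!
A permutation preserves every edge exactly when it moves each point to one lying in the same edges.
Since the transposition of two such points is a permutation of this kind, `K_Γ` is trivial if and
only if the edges separate points. In a spanning graph, two distinct points lying in the same
edges are precisely the endpoints of a radical.
-/

open Equiv MulAction
open scoped Pointwise

section EdgeFamily

variable {X : Type*} {Γ : Set (Set X)} {e : Set X} {x y : X}

/-- The group `K_Γ` of permutations preserving every edge of `Γ`, for an arbitrary family `Γ` of
subsets of `X`. -/
def edgeStabilizer (Γ : Set (Set X)) : Subgroup (Perm X) :=
  ⨅ e ∈ Γ, stabilizer (Perm X) e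

/-- Two points are indistinguishable by `Γ` if they lie in the same edges; `K_Γ` is trivial when
this relation is equality. -/
def Indistinguishable (Γ : Set (Set X)) (x y : X) : Prop :=
  ∀ e ∈ Γ, x ∈ e ↔ y ∈ e

/-- A radical of `Γ`: an edge none of whose vertices lies in another edge. -/
def IsRadicalEdge (Γ : Set (Set X)) (e : Set X) : Prop :=
  e ∈ Γ ∧ ∀ x ∈ e, ∀ e' ∈ Γ, x ∈ e' → e' = e

theorem mem_edgeStabilizer_iff_image_eq {g : Perm X} :
    g ∈ edgeStabilizer Γ ↔ ∀ e ∈ Γ, g '' e = e := by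
  simp only [edgeStabilizer, Subgroup.mem_iInf, mem_stabilizer_iff, ← Set.image_smul,
    Perm.smul_def]

theorem mem_edgeStabilizer_iff_indistinguishable {g : Perm X} :
    g ∈ edgeStabilizer Γ ↔ ∀ x, Indistinguishable Γ (g x) x := by
  simp only [edgeStabilizer, Subgroup.mem_iInf, mem_stabilizer_set, Perm.smul_def,
    Indistinguishable]
  exact ⟨fun h x e he ↦ h e he x, fun h e he x ↦ h x e he⟩

theorem Indistinguishable.swap_mem_edgeStabilizer [DecidableEq X]
    (h : Indistinguishable Γ x y) : swap x y ∈ edgeStabilizer Γ := by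
  refine mem_edgeStabilizer_iff_indistinguishable.mpr fun z e he ↦ ?_
  obtain rfl | hzx := eq_or_ne z x
  · rw [swap_apply_left, h e he]
  obtain rfl | hzy := eq_or_ne z y
  · rw [swap_apply_right, h e he]
  rw [swap_apply_of_ne_of_ne hzx hzy]

theorem edgeStabilizer_eq_bot_iff :
    edgeStabilizer Γ = ⊥ ↔ ∀ x y, Indistinguishable Γ x y → x = y := by
  classical
  rw [Subgroup.eq_bot_iff_forall]
  constructor
  · intro htriv x y hxy
    exact swap_eq_one_iff.mp (htriv _ hxy.swap_mem_edgeStabilizer)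
  · intro hsep g hg
    exact Equiv.ext fun x ↦ hsep _ _ (mem_edgeStabilizer_iff_indistinguishable.mp hg x)

theorem IsRadicalEdge.indistinguishable (he : IsRadicalEdge Γ e) (hx : x ∈ e) (hy : y ∈ e) :
    Indistinguishable Γ x y := fun e' he' ↦
  ⟨fun hx' ↦ he.2 x hx e' he' hx' ▸ hy, fun hy' ↦ he.2 y hy e' he' hy' ▸ hx⟩

theorem Indistinguishable.isRadicalEdge_pair (hcard : ∀ e ∈ Γ, e.ncard = 2)
    (h : Indistinguishable Γ x y) (hxy : x ≠ y) (hx : ∃ e ∈ Γ, x ∈ e) :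
    IsRadicalEdge Γ {x, y} := by
  have eq_pair : ∀ e ∈ Γ, x ∈ e → e = {x, y} := by
    intro e he hxe
    have hsub : {x, y} ⊆ e := Set.pair_subset hxe ((h e he).mp hxe)
    have hfin : e.Finite := Set.finite_of_ncard_pos (by simp [hcard e he])
    exact (Set.eq_of_subset_of_ncard_le hsub
      (by rw [hcard e he, Set.ncard_pair hxy]) hfin).symm
  obtain ⟨e, he, hxe⟩ := hx
  refine ⟨eq_pair e he hxe ▸ he, ?_⟩
  rintro z (rfl | rfl) e' he' hze'
  · exact eq_pair e' he' hze'
  · exact eq_pair e' he' ((h e' he').mpr hze')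

theorem exists_isRadicalEdge_iff (hcard : ∀ e ∈ Γ, e.ncard = 2)
    (hspan : ∀ x, ∃ e ∈ Γ, x ∈ e) :
    (∃ e, IsRadicalEdge Γ e) ↔ ∃ x y, Indistinguishable Γ x y ∧ x ≠ y := by
  constructor
  · rintro ⟨e, he⟩
    obtain ⟨x, y, hxy, rfl⟩ := Set.ncard_eq_two.mp (hcard e he.1)
    exact ⟨x, y, he.indistinguishable (by simp) (by simp), hxy⟩
  · rintro ⟨x, y, h, hxy⟩
    exact ⟨{x, y}, h.isRadicalEdge_pair hcard hxy (hspan x)⟩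

end EdgeFamily

theorem stmt_7_general {X : Type*} (Γ : Set (Set X)) (hcard : ∀ e ∈ Γ, e.ncard = 2)
    (hspan : ∀ x, ∃ e ∈ Γ, x ∈ e) :
    {g : Perm X | ∀ e ∈ Γ, g '' e = e} = {1} ↔
      ¬ ∃ e ∈ Γ, ∀ x ∈ e, ∀ e' ∈ Γ, x ∈ e' → e' = e := by
  have hK : {g : Perm X | ∀ e ∈ Γ, g '' e = e} = edgeStabilizer Γ :=
    Set.ext fun _ ↦ mem_edgeStabilizer_iff_image_eq.symm
  calc {g : Perm X | ∀ e ∈ Γ, g '' e = e} = {1}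
    _ ↔ edgeStabilizer Γ = ⊥ := by rw [hK, ← Subgroup.coe_bot, SetLike.coe_set_eq]
    _ ↔ ∀ x y, Indistinguishable Γ x y → x = y := edgeStabilizer_eq_bot_iff
    _ ↔ ¬ ∃ x y, Indistinguishable Γ x y ∧ x ≠ y := by
      simp only [ne_eq, not_exists, not_and, not_not]
    _ ↔ ¬ ∃ e, IsRadicalEdge Γ e := (exists_isRadicalEdge_iff hcard hspan).not.symm

theorem stmt_7 {X : Type*} [Fintype X] [DecidableEq X] (Γ : Finset (Finset X))
    (hcard : ∀ A ∈ Γ, A.card = 2)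
    (hspan : ∀ x : X, ∃ A ∈ Γ, x ∈ A) :
    {g : Equiv.Perm X | ∀ e ∈ Γ, e.image ⇑g = e} = {1} ↔
      ¬ ∃ e ∈ Γ, ∀ x ∈ e, ∀ e' ∈ Γ, x ∈ e' → e' = e := by
  simpa [← Finset.coe_image] using stmt_7_general
    ((fun A : Finset X ↦ (A : Set X)) '' Γ) (by simpa using hcard) (by simpa using hspan)
end

section
/- Let X be a finite type, n : ℕ, and A : Fin n → Set X an injective family of edges of a hypergraph Γ. Work in the Boolean ring R = AsBoolRing (Set (Equiv.Perm X)) of all sets of permutations of X, in which addition is symmetric difference and multiplication is intersection. Define the canonical matrix M : Matrix (Fin n) (Fin n) R by M i j = {g : Equiv.Perm X | g '' A i = A j}. Then the automorphism set of Γ equals the determinant of its canonical matrix: viewing Aut(Γ) = {g : Equiv.Perm X | ∀ i, ∃ j, g '' A i = A j} as an element of R, one has Aut(Γ) = Matrix.det M. -/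
/-!
In a Boolean ring the determinant is the permanent, since signs do not matter. Expanding the product
of the row sums of a matrix gives one term for each self-map of the index set; if the product of any
two entries in different positions of a column is zero, the terms of the non-injective maps vanish,
and what remains is the permanent. In a ring of sets, products are intersections and disjoint sums
are unions, so the product of the row sums of the canonical matrix is the set of all `g` such that
for every `i` some `j` satisfies `g '' A i = A j`.
-/

open Finset
open scoped Pointwise symmDiff

section DetPermanent

variable {ι R : Type*} [Fintype ι] [DecidableEq ι]

theorem det_eq_permanent_of_neg_one_eq_one [CommRing R] (h : (-1 : R) = 1) (M : Matrix ι ι R) :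
    M.det = M.permanent := by
  rw [Matrix.det_apply', Matrix.permanent]
  refine sum_congr rfl fun σ _ ↦ ?_
  rcases Int.units_eq_one_or (Equiv.Perm.sign σ) with hσ | hσ <;> simp [hσ, h]

theorem permanent_eq_prod_sum_of_pairwise_mul_eq_zero [CommSemiring R] {M : Matrix ι ι R}
    (hM : ∀ j, Pairwise fun i k ↦ M i j * M k j = 0) :
    M.permanent = ∏ i, ∑ j, M i j := by
  have prod_eq_zero_of_not_bijective (f : ι → ι) (hf : ¬ f.Bijective) : ∏ i, M i (f i) = 0 := by
    rw [← Finite.injective_iff_bijective, Function.not_injective_iff] at hf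
    obtain ⟨i, k, hfik, hik⟩ := hf
    have pair_eq_zero : M i (f i) * M k (f k) = 0 := hfik ▸ hM (f i) hik
    have pair_dvd_prod : M i (f i) * M k (f k) ∣ ∏ i, M i (f i) := by
      rw [← prod_pair (f := fun i ↦ M i (f i)) hik]
      exact prod_dvd_prod_of_subset _ _ _ (subset_univ _)
    exact zero_dvd_iff.mp (pair_eq_zero ▸ pair_dvd_prod)
  calc
    M.permanent = ∑ σ : Equiv.Perm ι, ∏ i, M i (σ i) := M.permanent_transpose.symm
    _ = ∑ f : ι → ι, ∏ i, M i (f i) := by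
      refine Fintype.sum_of_injective (fun σ : Equiv.Perm ι ↦ ⇑σ) DFunLike.coe_injective _ _
        (fun f hf ↦ prod_eq_zero_of_not_bijective f fun hbij ↦ ?_) fun _ ↦ rfl
      exact hf ⟨Equiv.ofBijective f hbij, rfl⟩
    _ = ∏ i, ∑ j, M i j := (Fintype.prod_sum M).symm

end DetPermanent

section ToBoolRing

variable {ι B : Type*}

theorem toBoolRing_finset_inf [BooleanAlgebra B] (s : Finset ι) (f : ι → B) :
    toBoolRing (s.inf f) = ∏ i ∈ s, toBoolRing (f i) := by
  classical
  induction s using Finset.induction_on with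
  | empty => rfl
  | insert i s hi ih => rw [inf_insert, toBoolRing_inf, ih, prod_insert hi]

theorem toBoolRing_finset_sup_of_pairwiseDisjoint [GeneralizedBooleanAlgebra B] {s : Finset ι}
    {f : ι → B} (hf : (s : Set ι).PairwiseDisjoint f) :
    toBoolRing (s.sup f) = ∑ i ∈ s, toBoolRing (f i) := by
  classical
  induction s using Finset.induction_on with
  | empty => rfl
  | insert i s hi ih =>
    rw [coe_insert, Set.pairwiseDisjoint_insert_of_notMem (by simpa using hi)] at hf
    have hdisj : Disjoint (f i) (s.sup f) := Finset.disjoint_sup_right.mpr hf.2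
    calc
      toBoolRing ((insert i s).sup f) = toBoolRing (f i ∆ s.sup f) := by
        rw [sup_insert, hdisj.symmDiff_eq_sup]
      _ = toBoolRing (f i) + toBoolRing (s.sup f) := rfl
      _ = ∑ k ∈ insert i s, toBoolRing (f k) := by rw [ih hf.1, sum_insert hi]

theorem det_map_toBoolRing_of_disjoint [BooleanAlgebra B] [Fintype ι] [DecidableEq ι]
    {M : Matrix ι ι B} (hrow : ∀ i, Pairwise fun j k ↦ Disjoint (M i j) (M i k))
    (hcol : ∀ j, Pairwise fun i k ↦ Disjoint (M i j) (M k j)) :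
    (M.map toBoolRing).det = toBoolRing (univ.inf fun i ↦ univ.sup fun j ↦ M i j) := by
  have mul_eq_zero_of_ne (j : ι) :
      Pairwise fun i k ↦ M.map toBoolRing i j * M.map toBoolRing k j = 0 :=
    fun i k hik ↦ congrArg toBoolRing (hcol j hik).eq_bot
  rw [det_eq_permanent_of_neg_one_eq_one (BooleanRing.neg_eq 1),
    permanent_eq_prod_sum_of_pairwise_mul_eq_zero mul_eq_zero_of_ne, toBoolRing_finset_inf]
  exact prod_congr rfl fun i _ ↦
    (toBoolRing_finset_sup_of_pairwiseDisjoint ((hrow i).set_pairwise _)).symm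

end ToBoolRing

theorem stmt_12_general {G P ι : Type*} [SMul G P] [IsLeftCancelSMul G P] [Fintype ι]
    [DecidableEq ι] {x : ι → P} (hx : Function.Injective x) :
    toBoolRing {g : G | ∀ i, ∃ j, g • x i = x j} =
      Matrix.det (.of fun i j ↦ toBoolRing {g : G | g • x i = x j}) := by
  have hrow (i : ι) :
      Pairwise fun j k ↦ Disjoint {g : G | g • x i = x j} {g : G | g • x i = x k} :=
    fun j k hjk ↦ Set.disjoint_left.mpr fun g hj hk ↦ hjk (hx (hj.symm.trans hk))
  have hcol (j : ι) :
      Pairwise fun i k ↦ Disjoint {g : G | g • x i = x j} {g : G | g • x k = x j} :=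
    fun i k hik ↦ Set.disjoint_left.mpr fun g hi hk ↦
      hik (hx (IsLeftCancelSMul.left_cancel g _ _ (hi.trans hk.symm)))
  refine .trans ?_ (det_map_toBoolRing_of_disjoint hrow hcol).symm
  congr 1
  ext g
  simp [inf_set_eq_iInter, sup_set_eq_biUnion]

theorem stmt_12 {X : Type*} [Fintype X] [DecidableEq X] (n : ℕ) (A : Fin n → Set X)
    (hA : Function.Injective A) :
    toBoolRing {g : Equiv.Perm X | ∀ i, ∃ j, ⇑g '' A i = A j}
      = Matrix.det (fun i j =>
          (toBoolRing {g : Equiv.Perm X | ⇑g '' A i = A j} :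
            AsBoolRing (Set (Equiv.Perm X)))) :=
  stmt_12_general (G := Equiv.Perm X) hA
end

section
/- Let X be a finite type, n : ℕ, and A : Fin n → Set X an injective family of edges of a hypergraph Γ. Then the automorphism set of Γ equals the product of the terminators, i.e. the intersection over each target edge index j of the union over source indices i of the permutations carrying A i onto A j: {g : Equiv.Perm X | ∀ i, ∃ j, g '' A i = A j} = ⋂ j, ⋃ i, {g : Equiv.Perm X | g '' A i = A j}. -/
/-!
A permutation `g` carries every edge to an edge when `g '' ·` maps the set of edges into itself; it
lies in every terminator when that set is contained in its own image under `g '' ·`. An injective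
self-map of a finite set is surjective, and a finite set covered by its own image equals that image,
so the two conditions agree.
-/

open Set

section FiniteSelfMap

variable {α ι : Type*} {f : α → α} {s : Set α}

theorem mapsTo_of_finite_of_surjOn (hs : s.Finite) (hf : SurjOn f s s) : MapsTo f s s := by
  have image_eq : s = f '' s :=
    (hs.image f).eq_of_subset_of_encard_le' hf (encard_image_le f s)
  exact mapsTo_iff_image_subset.mpr image_eq.superset

theorem mapsTo_iff_surjOn_of_finite_of_injOn (hs : s.Finite) (hf : InjOn f s) :
    MapsTo f s s ↔ SurjOn f s s :=
  ⟨fun hmaps ↦ ((hs.injOn_iff_bijOn_of_mapsTo hmaps).mp hf).surjOn,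
    mapsTo_of_finite_of_surjOn hs⟩

theorem forall_exists_apply_eq_iff_of_injOn_range [Finite ι] (a : ι → α)
    (hf : InjOn f (range a)) :
    (∀ i, ∃ j, f (a i) = a j) ↔ ∀ j, ∃ i, f (a i) = a j := by
  calc (∀ i, ∃ j, f (a i) = a j)
      ↔ MapsTo f (range a) (range a) := by
        simp only [mapsTo_range_iff, mem_range, eq_comm]
    _ ↔ SurjOn f (range a) (range a) :=
        mapsTo_iff_surjOn_of_finite_of_injOn (finite_range a) hf
    _ ↔ ∀ j, ∃ i, f (a i) = a j := by
        simp only [SurjOn, ← range_comp, range_subset_iff, mem_range, Function.comp_apply]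

end FiniteSelfMap

theorem stmt_13_general {X ι : Type*} [Finite ι] (A : ι → Set X) :
    {g : Equiv.Perm X | ∀ i, ∃ j, ⇑g '' A i = A j}
      = ⋂ j, ⋃ i, {g : Equiv.Perm X | ⇑g '' A i = A j} := by
  ext g
  simpa only [mem_ofPred_eq, mem_iInter, mem_iUnion] using
    forall_exists_apply_eq_iff_of_injOn_range A g.injective.image_injective.injOn

theorem stmt_13 {X : Type*} [Fintype X] (n : ℕ) (A : Fin n → Set X)
    (hA : Function.Injective A) :
    {g : Equiv.Perm X | ∀ i, ∃ j, ⇑g '' A i = A j}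
      = ⋂ j, ⋃ i, {g : Equiv.Perm X | ⇑g '' A i = A j} :=
  stmt_13_general A
end

section
/- Let X and Y be finite types, n : ℕ, and let A : Fin n → Set X and B : Fin n → Set Y be injective families of edges of hypergraphs Γ₁ on X and Γ₂ on Y. Work in the Boolean ring R = AsBoolRing (Set (X ≃ Y)) of all sets of bijections from X to Y, in which addition is symmetric difference and multiplication is intersection. Define the canonical transformation M : Matrix (Fin n) (Fin n) R by M i j = {e : X ≃ Y | e '' A i = B j}. Then the isomorphism set Iso(Γ₁,Γ₂) = {e : X ≃ Y | Set.range (fun i => e '' A i) = Set.range B}, viewed as an element of R, equals Matrix.det M. -/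
/-!
Evaluating at a fixed bijection `e` turns the canonical transformation into the 0/1 matrix that
records the coincidences `e '' A i = B j`. If every `e '' A i` is an edge `B j`, this is a
permutation matrix, with determinant `±1`; otherwise it has a zero row. Since `±1 = 1` in a Boolean
ring, the determinant is the truth value of `e` being an isomorphism.
-/

open Function Set

section CoincidenceMatrix

variable {ι α : Type*} {a b : ι → α}

theorem exists_perm_comp_eq_of_range_subset [Finite ι] (ha : Injective a)
    (h : range a ⊆ range b) : ∃ σ : Equiv.Perm ι, b ∘ σ = a := by
  obtain ⟨s, hs⟩ := range_subset_range_iff_exists_comp.mp h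
  have hs_inj : Injective s := Injective.of_comp (hs ▸ ha)
  exact ⟨Equiv.ofBijective s hs_inj.bijective_of_finite, hs.symm⟩

variable [DecidableEq α] (R : Type*)

/-- The 0/1 matrix recording the coincidences `a i = b j` between two families with a common index
type. -/
def coincidenceMatrix [Zero R] [One R] (a b : ι → α) : Matrix ι ι R :=
  Matrix.of fun i j => if a i = b j then 1 else 0

theorem coincidenceMatrix_comp_perm [DecidableEq ι] [Zero R] [One R] (hb : Injective b)
    (σ : Equiv.Perm ι) : coincidenceMatrix R (b ∘ σ) b = σ.permMatrix R := by
  ext i j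
  simp [coincidenceMatrix, Equiv.Perm.permMatrix, PEquiv.toMatrix_apply, hb.eq_iff, eq_comm]

variable [Fintype ι] [DecidableEq ι] [CommRing R]

theorem det_coincidenceMatrix_eq_zero (h : ¬range a ⊆ range b) :
    (coincidenceMatrix R a b).det = 0 := by
  obtain ⟨_, ⟨i, rfl⟩, hi⟩ := not_subset.mp h
  exact Matrix.det_eq_zero_of_row_eq_zero i fun j => if_neg fun hij => hi ⟨j, hij.symm⟩

-- Squaring removes the sign of the permutation, and is the identity map on a Boolean ring.
theorem det_coincidenceMatrix_sq [Decidable (range a = range b)] (ha : Injective a) :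
    (coincidenceMatrix R a b).det ^ 2 = if range a = range b then 1 else 0 := by
  by_cases h : range a ⊆ range b
  · obtain ⟨σ, rfl⟩ := exists_perm_comp_eq_of_range_subset ha h
    have hb : Injective b := (Injective.of_comp_iff' b σ.bijective).mp ha
    rw [coincidenceMatrix_comp_perm R hb, Matrix.det_permutation,
      if_pos (σ.surjective.range_comp b)]
    exact_mod_cast congrArg (fun u : ℤˣ => ((u : ℤ) : R)) (Int.units_sq (Equiv.Perm.sign σ))
  · rw [det_coincidenceMatrix_eq_zero R h, if_neg fun heq => h heq.subset, zero_pow two_ne_zero]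

end CoincidenceMatrix

section BooleanRingOfSets

theorem toBoolRing_prop_eq_ite (p : Prop) [Decidable p] :
    toBoolRing p = if p then (1 : AsBoolRing Prop) else 0 := by
  split_ifs with hp
  · exact congrArg toBoolRing (eq_true hp)
  · exact congrArg toBoolRing (eq_false hp)

variable {E : Type*}

/-- Evaluation of a set at the point `e`, as a homomorphism to the two-element Boolean ring,
realized as `AsBoolRing Prop`. -/
def evalAt (e : E) : AsBoolRing (Set E) →+* AsBoolRing Prop :=
  BoundedLatticeHom.asBoolRing
    { toFun := fun S => e ∈ S
      map_sup' := fun _ _ => rfl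
      map_inf' := fun _ _ => rfl
      map_top' := rfl
      map_bot' := rfl }

theorem evalAt_toBoolRing (e : E) (S : Set E) : evalAt e (toBoolRing S) = toBoolRing (e ∈ S) :=
  rfl

theorem eq_of_forall_evalAt_eq {S T : AsBoolRing (Set E)} (h : ∀ e, evalAt e S = evalAt e T) :
    S = T :=
  ofBoolRing.injective <| Set.ext fun e => (toBoolRing_inj.mp (h e)).to_iff

variable {ι α : Type*}

theorem mapMatrix_evalAt_eq_coincidenceMatrix [Fintype ι] [DecidableEq ι] [DecidableEq α] (e : E)
    (f : E → ι → α) (b : ι → α) :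
    (evalAt e).mapMatrix (Matrix.of fun i j => toBoolRing {e | f e i = b j}) =
      coincidenceMatrix (AsBoolRing Prop) (f e) b := by
  ext i j
  exact (evalAt_toBoolRing e _).trans (toBoolRing_prop_eq_ite (f e i = b j))

theorem stmt_15_general [Fintype ι] [DecidableEq ι] (f : E → ι → α) (b : ι → α)
    (hf : ∀ e, Injective (f e)) :
    toBoolRing {e | range (f e) = range b} =
      Matrix.det (Matrix.of fun i j => toBoolRing {e | f e i = b j}) := by
  classical
  refine eq_of_forall_evalAt_eq fun e => ?_
  calc evalAt e (toBoolRing {e | range (f e) = range b})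
      = toBoolRing (range (f e) = range b) := evalAt_toBoolRing e _
    _ = if range (f e) = range b then 1 else 0 := toBoolRing_prop_eq_ite _
    _ = (coincidenceMatrix (AsBoolRing Prop) (f e) b).det ^ 2 :=
      (det_coincidenceMatrix_sq _ (hf e)).symm
    _ = (coincidenceMatrix (AsBoolRing Prop) (f e) b).det := by rw [sq, BooleanRing.mul_self]
    _ = evalAt e (Matrix.det (Matrix.of fun i j => toBoolRing {e | f e i = b j})) := by
      rw [RingHom.map_det, mapMatrix_evalAt_eq_coincidenceMatrix]

end BooleanRingOfSets

theorem stmt_15 {X Y : Type*} [Fintype X] [Fintype Y] (n : ℕ)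
    (A : Fin n → Set X) (B : Fin n → Set Y)
    (hA : Function.Injective A) (hB : Function.Injective B) :
    toBoolRing {e : X ≃ Y | Set.range (fun i => ⇑e '' A i) = Set.range B}
      = Matrix.det (fun i j =>
          (toBoolRing {e : X ≃ Y | ⇑e '' A i = B j} :
            AsBoolRing (Set (X ≃ Y)))) :=
  stmt_15_general (fun (e : X ≃ Y) i => e '' A i) B fun e => e.injective.image_injective.comp hA
end
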